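/- arXiv:2006.06307 — 2 statements merged into one kernel-verified Lean document; each statement's English description precedes it below -/
import Mathlib

section
/- For every positive integer n there exists a word of length n over a 3-letter alphabet that avoids abelian 4-powers cyclically. (In particular, A(3) ≤ 4.) -/
/-- `u` is an abelian `N`-power of period `m`: a concatenation of `N` nonempty
pairwise abelian-equivalent words of common length `m`. -/
def IsAbelianPower {α : Type*} (N m : ℕ) (u : List α) : Prop :=
  0 < m ∧ ∃ f : Fin N → List α,
    u = (List.ofFn f).flatten ∧ (∀ i, (f i).length = m) ∧ ∀ i j, List.Perm (f i) (f j)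

/-- `u` occurs in the infinite word `w^ω`, i.e. `u` is a factor of `w^k` for some `k`. -/
def OccursCyc {α : Type*} (w u : List α) : Prop :=
  ∃ k : ℕ, u <:+: (List.replicate k w).flatten

/-- `w` avoids abelian `N`-powers cyclically: every abelian `N`-power of period `m`
occurring in `w^ω` satisfies `m ≥ |w|`. -/
def AvoidsAbelianCyc {α : Type*} (N : ℕ) (w : List α) : Prop :=
  ∀ m u, IsAbelianPower N m u → OccursCyc w u → w.length ≤ m

/-!
Call a word abelian `N`-power free if it has no abelian `N`-power as a factor. If `v` is such a word
and the letter `a` does not occur in it, then `v ++ [a]` avoids abelian `N`-powers cyclically.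
Indeed, put `n = |v| + 1` and let an abelian `N`-power of period `m < n` in `(va)^ω` be given.
Its blocks contain the same number `d` of letters `a`, so reducing the cuts between them modulo `n`
gives cuts of `v` in arithmetic progression with difference `m - n * d ≠ 0`, and the prefixes of `v`
ending there again have Parikh vectors in arithmetic progression. Read in increasing order, these
cuts delimit an abelian `N`-power in `v`.

It remains to find long binary words that are abelian 4-power free, and the morphism
`a ↦ abb, b ↦ aaab` of Dekking preserves this property. Give `a` weight 1 and `b` weight 2: both
images have weight divisible by 5, and no prefix of an image has weight 4 modulo 5. Along the five
cuts of an abelian 4-power the weights form an arithmetic progression in `ZMod 5` that misses the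
value 4, hence a constant one. The weight modulo 5 determines the position of a cut relative to a
nearby border between images, so all five cuts can be shifted simultaneously to such borders, and
the power descends to the preimage because the matrix of the morphism is invertible.
-/

section AbelianPowerFree

variable {α β : Type*} {N m : ℕ}

/-- `w` is abelian `N`-power free: none of its factors is an abelian `N`-power. -/
def AbelianPowerFree (N : ℕ) (w : List α) : Prop :=
  ∀ m u, IsAbelianPower N m u → ¬ u <:+: w

/-- `x 0, …, x N` are positions in `w`, in arithmetic progression with difference `δ`, and the
Parikh vectors of the prefixes of `w` ending there are in arithmetic progression as well. For
`0 < δ` these are the cuts of an abelian `N`-power of period `δ` in `w`; for `δ < 0` they are the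
cuts of one of period `-δ`, listed from right to left. -/
structure IsAbelianProgression [DecidableEq α] (N : ℕ) (w : List α) (x : ℕ → ℕ) (δ : ℤ) :
    Prop where
  le_length : ∀ i ≤ N, x i ≤ w.length
  position_eq : ∀ i ≤ N, (x i : ℤ) = x 0 + i * δ
  count_eq : ∀ a, ∃ d : ℤ, ∀ i ≤ N,
    ((w.take (x i)).count a : ℤ) = (w.take (x 0)).count a + i * d

theorem IsAbelianProgression.reverse [DecidableEq α] {w : List α} {x : ℕ → ℕ} {δ : ℤ}
    (h : IsAbelianProgression N w x δ) :
    IsAbelianProgression N w (fun i => x (N - i)) (-δ) where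
  le_length i _ := h.le_length _ (Nat.sub_le N i)
  position_eq i hi := by
    have hi' := h.position_eq (N - i) (Nat.sub_le N i)
    rw [Nat.cast_sub hi] at hi'
    rw [hi', Nat.sub_zero, h.position_eq N le_rfl]
    ring
  count_eq a := by
    obtain ⟨d, hd⟩ := h.count_eq a
    refine ⟨-d, fun i hi => ?_⟩
    have hi' := hd (N - i) (Nat.sub_le N i)
    rw [Nat.cast_sub hi] at hi'
    rw [hi', Nat.sub_zero, hd N le_rfl]
    ring

theorem length_flatten_of_forall_length_eq {L : List (List α)} (hL : ∀ l ∈ L, l.length = m) :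
    L.flatten.length = L.length * m := by
  rw [List.length_flatten, List.map_eq_replicate_iff.2 hL, List.sum_replicate, smul_eq_mul]

theorem take_mul_flatten {L : List (List α)} (hL : ∀ l ∈ L, l.length = m) {i : ℕ}
    (hi : i ≤ L.length) : L.flatten.take (i * m) = (L.take i).flatten := by
  rw [← List.take_sum_flatten, List.map_eq_replicate_iff.2 hL, List.take_replicate,
    List.sum_replicate, smul_eq_mul, min_eq_left hi]

theorem IsAbelianPower.length_eq {u : List α} (hu : IsAbelianPower N m u) : u.length = N * m := by
  obtain ⟨-, f, rfl, hlength, -⟩ := hu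
  rw [length_flatten_of_forall_length_eq (List.forall_mem_ofFn_iff.2 hlength), List.length_ofFn]

theorem IsAbelianPower.exists_count_take_mul [DecidableEq α] {u : List α}
    (hu : IsAbelianPower N m u) (a : α) :
    ∃ d : ℕ, ∀ i ≤ N, (u.take (i * m)).count a = i * d := by
  obtain ⟨-, f, rfl, hlength, hperm⟩ := hu
  obtain ⟨d, hd⟩ : ∃ d, ∀ i, (f i).count a = d := by
    rcases N with - | N
    · exact ⟨0, fun i => i.elim0⟩
    · exact ⟨(f 0).count a, fun i => (hperm i 0).count_eq a⟩
  refine ⟨d, fun i hi => ?_⟩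
  rw [take_mul_flatten (List.forall_mem_ofFn_iff.2 hlength) (by simpa using hi),
    List.count_flatten, List.map_take, List.map_eq_replicate_iff.2 (List.forall_mem_ofFn_iff.2 hd),
    List.take_replicate, List.sum_replicate, smul_eq_mul, List.length_ofFn, min_eq_left hi]

theorem IsAbelianPower.exists_isAbelianProgression [DecidableEq α] {u w : List α}
    (hu : IsAbelianPower N m u) (huw : u <:+: w) : ∃ x, IsAbelianProgression N w x m := by
  obtain ⟨s, t, rfl⟩ := huw
  have take_eq (i : ℕ) (hi : i ≤ N) :
      (s ++ u ++ t).take (s.length + i * m) = s ++ u.take (i * m) := by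
    rw [List.append_assoc, List.take_length_add_append, List.take_append_of_le_length]
    exact hu.length_eq ▸ Nat.mul_le_mul_right m hi
  refine ⟨fun i => s.length + i * m, fun i hi => ?_, fun i _ => by push_cast; ring, fun a => ?_⟩
  · have := Nat.mul_le_mul_right m hi
    simp only [List.length_append, hu.length_eq]
    omega
  · obtain ⟨d, hd⟩ := hu.exists_count_take_mul a
    refine ⟨d, fun i hi => ?_⟩
    rw [take_eq i hi, take_eq 0 (Nat.zero_le N), List.count_append, List.count_append, hd i hi,
      hd 0 (Nat.zero_le N)]
    push_cast
    ring

theorem flatten_ofFn_take_drop_mul (l : List α) (N m : ℕ) :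
    (List.ofFn fun i : Fin N => (l.drop (i * m)).take m).flatten = l.take (N * m) := by
  induction N with
  | zero => simp
  | succ N ih =>
    rw [List.ofFn_succ_last, List.flatten_append, add_mul, one_mul, List.take_add]
    simpa using ih

theorem IsAbelianProgression.exists_isAbelianPower [DecidableEq α] {w : List α} {x : ℕ → ℕ}
    (h : IsAbelianProgression N w x m) (hm : 0 < m) : ∃ u, IsAbelianPower N m u ∧ u <:+: w := by
  have position_eq (i : ℕ) (hi : i ≤ N) : x i = x 0 + i * m := mod_cast h.position_eq i hi
  have count_block (a : α) : ∃ d : ℤ, ∀ i : Fin N,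
      ((((w.drop (x 0)).drop (i * m)).take m).count a : ℤ) = d := by
    obtain ⟨d, hd⟩ := h.count_eq a
    refine ⟨d, fun i => ?_⟩
    have hsucc := hd (i + 1) i.isLt
    rw [position_eq _ i.isLt, Nat.succ_mul, ← add_assoc, List.take_add, List.count_append,
      ← position_eq i i.isLt.le] at hsucc
    have hi := hd i i.isLt.le
    rw [List.drop_drop, ← position_eq i i.isLt.le]
    push_cast at hsucc
    linarith
  refine ⟨(w.drop (x 0)).take (N * m),
    ⟨hm, _, (flatten_ofFn_take_drop_mul _ N m).symm, fun i => ?_, fun i j => ?_⟩,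
    (List.take_prefix _ _).isInfix.trans (List.drop_suffix _ _).isInfix⟩
  · have hle := h.le_length (i + 1) i.isLt
    rw [position_eq _ i.isLt, Nat.succ_mul] at hle
    simp only [List.length_take, List.length_drop]
    omega
  · refine List.perm_iff_count.2 fun a => ?_
    obtain ⟨d, hd⟩ := count_block a
    exact_mod_cast (hd i).trans (hd j).symm

theorem abelianPowerFree_iff [DecidableEq α] {w : List α} :
    AbelianPowerFree N w ↔ ∀ x δ, IsAbelianProgression N w x δ → δ = 0 := by
  refine ⟨fun hw x δ hx => ?_, fun hw m u hu huw => ?_⟩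
  · have not_pos (y : ℕ → ℕ) (ε : ℤ) (hy : IsAbelianProgression N w y ε) : ¬ 0 < ε := fun hε => by
      lift ε to ℕ using hε.le
      obtain ⟨u, hu, huw⟩ := hy.exists_isAbelianPower (mod_cast hε)
      exact hw ε u hu huw
    have := not_pos x δ hx
    have := not_pos _ _ hx.reverse
    omega
  · obtain ⟨x, hx⟩ := hu.exists_isAbelianProgression huw
    have := hw x m hx
    have := hu.1
    omega

theorem AbelianPowerFree.of_infix {v w : List α} (hw : AbelianPowerFree N w) (hvw : v <:+: w) :
    AbelianPowerFree N v :=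
  fun m u hu huv => hw m u hu (huv.trans hvw)

theorem abelianPowerFree_of_length_lt {w : List α} (hw : w.length < N) : AbelianPowerFree N w := by
  intro m u hu huw
  have hle := huw.length_le
  rw [hu.length_eq] at hle
  exact (hw.trans_le (Nat.le_mul_of_pos_right N hu.1)).not_ge hle

theorem AbelianPowerFree.map {w : List α} (hw : AbelianPowerFree N w) {f : α → β}
    (hf : Function.Injective f) : AbelianPowerFree N (w.map f) := by
  classical
  refine abelianPowerFree_iff.2 fun x δ hx => abelianPowerFree_iff.1 hw x δ ⟨fun i hi => ?_,
    hx.position_eq, fun a => ?_⟩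
  · simpa using hx.le_length i hi
  · simpa only [← List.map_take, List.count_map_of_injective _ f hf] using hx.count_eq (f a)

end AbelianPowerFree

section Cyclic

variable {α : Type*} {N : ℕ}

theorem take_flatten_replicate (w : List α) {k i : ℕ} (hi : i ≤ k * w.length) :
    (List.replicate k w).flatten.take i =
      (List.replicate (i / w.length) w).flatten ++ w.take (i % w.length) := by
  induction k generalizing i with
  | zero =>
    obtain rfl : i = 0 := by simpa using hi
    simp
  | succ k ih =>
    rw [List.replicate_succ, List.flatten_cons]
    rcases lt_or_ge i w.length with hlt | hge
    · rw [List.take_append_of_le_length hlt.le, Nat.div_eq_of_lt hlt, Nat.mod_eq_of_lt hlt]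
      simp
    · obtain ⟨t, rfl⟩ := Nat.exists_eq_add_of_le hge
      have ht : t ≤ k * w.length := by
        rw [add_mul, one_mul] at hi
        omega
      rcases w.length.eq_zero_or_pos with hw | hw
      · simp [List.length_eq_zero_iff.1 hw]
      · rw [List.take_length_add_append, ih ht, Nat.add_div_left _ hw, Nat.add_mod_left,
          List.replicate_succ, List.flatten_cons, List.append_assoc]

theorem count_take_flatten_replicate [DecidableEq α] (w : List α) {k i : ℕ}
    (hi : i ≤ k * w.length) (a : α) :
    ((List.replicate k w).flatten.take i).count a =
      i / w.length * w.count a + (w.take (i % w.length)).count a := by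
  rw [take_flatten_replicate w hi, List.count_append, List.count_flatten, List.map_replicate,
    List.sum_replicate, smul_eq_mul]

theorem IsAbelianProgression.exists_isAbelianProgression_mod [DecidableEq α] {v : List α} {a : α}
    (ha : a ∉ v) {k : ℕ} {x : ℕ → ℕ} {δ : ℤ}
    (h : IsAbelianProgression N (List.replicate k (v ++ [a])).flatten x δ) :
    ∃ d : ℤ, IsAbelianProgression N v (fun i => x i % (v.length + 1))
      (δ - (v.length + 1) * d) := by
  set n := v.length + 1 with hn
  have hmod (i : ℕ) : x i % n ≤ v.length := Nat.lt_succ_iff.1 (Nat.mod_lt _ v.length.succ_pos)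
  have hcount (b : α) (i : ℕ) (hi : i ≤ N) :
      ((List.replicate k (v ++ [a])).flatten.take (x i)).count b =
        x i / n * (v ++ [a]).count b + (v.take (x i % n)).count b := by
    have hle := h.le_length i hi
    rw [length_flatten_of_forall_length_eq fun l hl => congrArg _ (List.eq_of_mem_replicate hl),
      List.length_replicate] at hle
    rw [count_take_flatten_replicate _ hle, List.length_append, List.length_singleton,
      List.take_append_of_le_length (hmod i)]
  have hcount_a (i : ℕ) (hi : i ≤ N) :
      ((List.replicate k (v ++ [a])).flatten.take (x i)).count a = x i / n := by
    rw [hcount a i hi, List.count_eq_zero_of_not_mem fun hmem => ha (List.mem_of_mem_take hmem),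
      List.count_append, List.count_eq_zero_of_not_mem ha]
    simp
  obtain ⟨d, hd⟩ := h.count_eq a
  have hdiv (i : ℕ) (hi : i ≤ N) : ((x i / n : ℕ) : ℤ) = (x 0 / n : ℕ) + i * d := by
    rw [← hcount_a i hi, ← hcount_a 0 (Nat.zero_le N), hd i hi]
  refine ⟨d, fun i _ => hmod i, fun i hi => ?_, fun b => ?_⟩
  · have hi_div : ((x i % n : ℕ) : ℤ) + n * (x i / n : ℕ) = x i := mod_cast Nat.mod_add_div _ _
    have h0_div : ((x 0 % n : ℕ) : ℤ) + n * (x 0 / n : ℕ) = x 0 := mod_cast Nat.mod_add_div _ _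
    have hn' : (n : ℤ) = v.length + 1 := mod_cast hn
    rw [← hn']
    linear_combination hi_div - h0_div + h.position_eq i hi - n * hdiv i hi
  · obtain ⟨e, he⟩ := h.count_eq b
    refine ⟨e - d * (v ++ [a]).count b, fun i hi => ?_⟩
    have hi_count := he i hi
    rw [hcount b i hi, hcount b 0 (Nat.zero_le N), Nat.cast_add, Nat.cast_add, Nat.cast_mul,
      Nat.cast_mul, hdiv i hi] at hi_count
    linear_combination hi_count

theorem AbelianPowerFree.avoidsAbelianCyc_concat {v : List α} (hv : AbelianPowerFree N v) {a : α}
    (ha : a ∉ v) : AvoidsAbelianCyc N (v ++ [a]) := by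
  classical
  rintro m u hu ⟨k, huk⟩
  obtain ⟨x, hx⟩ := hu.exists_isAbelianProgression huk
  obtain ⟨d, hd⟩ := hx.exists_isAbelianProgression_mod ha
  have hm : (m : ℤ) = (v ++ [a]).length * d := by
    simpa [sub_eq_zero] using abelianPowerFree_iff.1 hv _ _ hd
  exact_mod_cast Int.le_of_dvd (mod_cast hu.1) ⟨d, hm⟩

end Cyclic

theorem eq_zero_of_forall_add_natCast_mul_ne {p : ℕ} [Fact p.Prime] {t d c : ZMod p}
    (h : ∀ i < p, t + i * d ≠ c) : d = 0 := by
  by_contra hd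
  refine h ((c - t) / d).val (ZMod.val_lt _) ?_
  rw [ZMod.natCast_zmod_val, div_mul_cancel₀ _ hd, add_sub_cancel]

theorem exists_eq_add_mul_of_const_mul {N : ℕ} {c : ℤ} (hc : c ≠ 0) {f : ℕ → ℤ} {d : ℤ}
    (h : ∀ i ≤ N, c * f i = c * f 0 + i * d) : ∃ e : ℤ, ∀ i ≤ N, f i = f 0 + i * e := by
  refine ⟨f 1 - f 0, fun i hi => ?_⟩
  rcases i.eq_zero_or_pos with rfl | hpos
  · simp
  · have h1 := h 1 (hpos.trans_le hi)
    refine mul_left_cancel₀ hc ?_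
    push_cast at h1
    linear_combination h i hi - i * h1

section Dekking

variable {N : ℕ}

/-- Dekking's morphism `a ↦ abb, b ↦ aaab`, with `a` encoded as `true` and `b` as `false`. It
preserves abelian `N`-power freeness for `N ≥ 4`. -/
def dekking (v : List Bool) : List Bool :=
  v.flatMap fun b => if b then [true, false, false] else [true, true, true, false]

theorem dekking_cons (b : Bool) (v : List Bool) :
    dekking (b :: v) =
      (if b then [true, false, false] else [true, true, true, false]) ++ dekking v :=
  rfl

theorem count_true_dekking (v : List Bool) :
    (dekking v).count true = v.count true + 3 * v.count false := by
  induction v with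
  | nil => rfl
  | cons b v ih => cases b <;> simp +arith [dekking_cons, ih]

theorem count_false_dekking (v : List Bool) :
    (dekking v).count false = 2 * v.count true + v.count false := by
  induction v with
  | nil => rfl
  | cons b v ih => cases b <;> simp +arith [dekking_cons, ih]

theorem length_le_length_dekking (v : List Bool) : 3 * v.length ≤ (dekking v).length := by
  rw [← List.count_true_add_count_false v, ← List.count_true_add_count_false (dekking v),
    count_true_dekking, count_false_dekking]
  omega

theorem exists_take_dekking_eq (v : List Bool) (k : ℕ) : ∃ j ≤ v.length,
    (∃ r ≤ 2, (dekking v).take k = dekking (v.take j) ++ List.replicate r true) ∨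
      (dekking v).take k ++ [false] = dekking (v.take j) := by
  induction v generalizing k with
  | nil => exact ⟨0, le_rfl, .inl ⟨0, by simp [dekking]⟩⟩
  | cons b v ih =>
    have of_tail (k' : ℕ) (hk : (dekking (b :: v)).take k = dekking [b] ++ (dekking v).take k') :
        ∃ j ≤ (b :: v).length,
          (∃ r ≤ 2, (dekking (b :: v)).take k =
            dekking ((b :: v).take j) ++ List.replicate r true) ∨
          (dekking (b :: v)).take k ++ [false] = dekking ((b :: v).take j) := by
      obtain ⟨j, hj, h⟩ := ih k'
      have dekking_take : dekking ((b :: v).take (j + 1)) = dekking [b] ++ dekking (v.take j) := by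
        simp [dekking]
      refine ⟨j + 1, Nat.succ_le_succ hj, ?_⟩
      rcases h with ⟨r, hr, h⟩ | h
      · exact .inl ⟨r, hr, by rw [hk, h, dekking_take, List.append_assoc]⟩
      · exact .inr (by rw [hk, List.append_assoc, h, dekking_take])
    match b, k with
    | _, 0 => exact ⟨0, Nat.zero_le _, .inl ⟨0, by simp [dekking]⟩⟩
    | true, 1 | false, 1 => exact ⟨0, Nat.zero_le _, .inl ⟨1, by simp [dekking]⟩⟩
    | true, 2 => exact ⟨1, by simp, .inr (by simp [dekking])⟩
    | true, k + 3 => exact of_tail k rfl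
    | false, 2 => exact ⟨0, Nat.zero_le _, .inl ⟨2, by simp [dekking]⟩⟩
    | false, 3 => exact ⟨1, by simp, .inr (by simp [dekking])⟩
    | false, k + 4 => exact of_tail k rfl

/-- The weight of a binary word modulo 5, where `true` has weight 1 and `false` has weight 2. These
weights are chosen so that both letters have images of weight 0 under Dekking's morphism. -/
def dekkingWeight (w : List Bool) : ZMod 5 :=
  w.count true + 2 * w.count false

theorem dekkingWeight_dekking (v : List Bool) : dekkingWeight (dekking v) = 0 := by
  have five_eq_zero : (5 : ZMod 5) = 0 := rfl
  rw [dekkingWeight, count_true_dekking, count_false_dekking]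
  push_cast
  linear_combination (v.count true + v.count false : ZMod 5) * five_eq_zero

theorem IsAbelianProgression.exists_dekkingWeight_eq {w : List Bool} {x : ℕ → ℕ} {δ : ℤ}
    (h : IsAbelianProgression N w x δ) :
    ∃ d : ZMod 5, ∀ i ≤ N, dekkingWeight (w.take (x i)) = dekkingWeight (w.take (x 0)) + i * d := by
  obtain ⟨d, hd⟩ := h.count_eq true
  obtain ⟨e, he⟩ := h.count_eq false
  refine ⟨d + 2 * e, fun i hi => ?_⟩
  have hdi := congrArg (Int.cast : ℤ → ZMod 5) (hd i hi)
  have hei := congrArg (Int.cast : ℤ → ZMod 5) (he i hi)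
  push_cast at hdi hei
  unfold dekkingWeight
  linear_combination hdi + 2 * hei

/-- The Parikh vector of a prefix of a Dekking image minus that of a nearby prefix consisting of
complete images of letters. Here `c` is the weight of the former prefix: for `c = 0, 1, 2` it has
`c` additional letters `true`, and for `c = 3` it lacks one letter `false`. -/
def cutShift (c : Fin 4) (b : Bool) : ℤ :=
  if b then ![0, 1, 2, 0] c else ![0, 0, 0, -1] c

theorem exists_count_take_dekking (v : List Bool) (k : ℕ) : ∃ j ≤ v.length, ∃ c : Fin 4, ∀ b,
    (((dekking v).take k).count b : ℤ) = (dekking (v.take j)).count b + cutShift c b := by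
  obtain ⟨j, hj, ⟨r, hr, h⟩ | h⟩ := exists_take_dekking_eq v k
  · refine ⟨j, hj, ⟨r, by omega⟩, fun b => ?_⟩
    rw [h]
    interval_cases r <;> cases b <;> simp [cutShift]
  · refine ⟨j, hj, 3, fun b => ?_⟩
    rw [← h]
    cases b <;> simp [cutShift]

theorem dekkingWeight_eq_of_count_eq_add_cutShift {u v : List Bool} {c : Fin 4}
    (h : ∀ b, (u.count b : ℤ) = (dekking v).count b + cutShift c b) :
    dekkingWeight u = (c : ℕ) := by
  have cutShift_weight : ((cutShift c true + 2 * cutShift c false : ℤ) : ZMod 5) = (c : ℕ) := by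
    fin_cases c <;> rfl
  have h_cast (b : Bool) := congrArg (Int.cast : ℤ → ZMod 5) (h b)
  have weight_image := dekkingWeight_dekking v
  push_cast at h_cast cutShift_weight
  unfold dekkingWeight at weight_image ⊢
  linear_combination h_cast true + 2 * h_cast false + weight_image + cutShift_weight

theorem IsAbelianProgression.exists_shift_dekking (hN : 4 ≤ N) {v : List Bool} {x : ℕ → ℕ}
    {δ : ℤ} (h : IsAbelianProgression N (dekking v) x δ) :
    ∃ (y : ℕ → ℕ) (s : Bool → ℤ), (∀ i, y i ≤ v.length) ∧ ∀ i ≤ N, ∀ b,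
      (((dekking v).take (x i)).count b : ℤ) = (dekking (v.take (y i))).count b + s b := by
  choose y hy c hc using fun i => exists_count_take_dekking v (x i)
  have weight_eq (i : ℕ) : dekkingWeight ((dekking v).take (x i)) = (c i : ℕ) :=
    dekkingWeight_eq_of_count_eq_add_cutShift (hc i)
  obtain ⟨d, hd⟩ := h.exists_dekkingWeight_eq
  simp only [weight_eq] at hd
  have weight_ne_four : ∀ r : Fin 4, ((r : ℕ) : ZMod 5) ≠ 4 := by decide
  have cast_injective : ∀ r s : Fin 4, ((r : ℕ) : ZMod 5) = (s : ℕ) → r = s := by decide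
  have : Fact (Nat.Prime 5) := ⟨Nat.prime_five⟩
  have d_eq_zero : d = 0 := eq_zero_of_forall_add_natCast_mul_ne fun i hi =>
    hd i ((Nat.le_of_lt_succ hi).trans hN) ▸ weight_ne_four (c i)
  have c_eq (i : ℕ) (hi : i ≤ N) : c i = c 0 :=
    cast_injective _ _ (by simpa [d_eq_zero] using hd i hi)
  exact ⟨y, cutShift (c 0), hy, fun i hi => c_eq i hi ▸ hc i⟩

theorem exists_count_eq_of_count_dekking_eq {u : ℕ → List Bool}
    (h : ∀ b, ∃ d : ℤ, ∀ i ≤ N,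
      ((dekking (u i)).count b : ℤ) = (dekking (u 0)).count b + i * d) (b : Bool) :
    ∃ d : ℤ, ∀ i ≤ N, ((u i).count b : ℤ) = (u 0).count b + i * d := by
  obtain ⟨d, hd⟩ := h true
  obtain ⟨e, he⟩ := h false
  simp only [count_true_dekking, count_false_dekking] at hd he
  push_cast at hd he
  have five_ne_zero : (5 : ℤ) ≠ 0 := by norm_num
  cases b
  · exact exists_eq_add_mul_of_const_mul five_ne_zero (d := 2 * d - e) fun i hi => by
      linear_combination 2 * hd i hi - he i hi
  · exact exists_eq_add_mul_of_const_mul five_ne_zero (d := 3 * e - d) fun i hi => by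
      linear_combination 3 * he i hi - hd i hi

theorem count_true_add_count_false_take {w : List Bool} {k : ℕ} (hk : k ≤ w.length) :
    ((w.take k).count true : ℤ) + (w.take k).count false = k := by
  rw [← Nat.cast_add, List.count_true_add_count_false, List.length_take_of_le hk]

theorem abelianPowerFree_dekking (hN : 4 ≤ N) {v : List Bool} (hv : AbelianPowerFree N v) :
    AbelianPowerFree N (dekking v) := by
  have one_le : 1 ≤ N := le_trans (by norm_num) hN
  refine abelianPowerFree_iff.2 fun x δ hx => ?_
  obtain ⟨y, s, hy, hs⟩ := hx.exists_shift_dekking hN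
  have count_eq : ∀ b, ∃ d : ℤ, ∀ i ≤ N,
      ((v.take (y i)).count b : ℤ) = (v.take (y 0)).count b + i * d := by
    refine exists_count_eq_of_count_dekking_eq (u := fun i => v.take (y i)) fun b => ?_
    obtain ⟨d, hd⟩ := hx.count_eq b
    exact ⟨d, fun i hi => by linear_combination hd i hi - hs i hi b + hs 0 (Nat.zero_le N) b⟩
  obtain ⟨d, hd⟩ := count_eq true
  obtain ⟨e, he⟩ := count_eq false
  have position_eq (i : ℕ) (hi : i ≤ N) : (y i : ℤ) = y 0 + i * (d + e) := by
    rw [← count_true_add_count_false_take (hy i), ← count_true_add_count_false_take (hy 0)]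
    linear_combination hd i hi + he i hi
  have step_eq_zero : d + e = 0 :=
    abelianPowerFree_iff.1 hv y (d + e) ⟨fun i _ => hy i, position_eq, count_eq⟩
  have y_eq : y 1 = y 0 := by simpa [step_eq_zero] using position_eq 1 one_le
  have x_eq : (x 1 : ℤ) = x 0 := by
    rw [← count_true_add_count_false_take (hx.le_length 1 one_le),
      ← count_true_add_count_false_take (hx.le_length 0 (Nat.zero_le N))]
    simp only [hs 1 one_le, hs 0 (Nat.zero_le N), y_eq]
  simpa [x_eq] using hx.position_eq 1 one_le

theorem exists_length_eq_and_abelianPowerFree (hN : 4 ≤ N) (n : ℕ) :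
    ∃ v : List Bool, v.length = n ∧ AbelianPowerFree N v := by
  have exists_longer : ∃ v : List Bool, n < v.length ∧ AbelianPowerFree N v := by
    induction n with
    | zero => exact ⟨[true], by simp, abelianPowerFree_of_length_lt (lt_of_lt_of_le (by simp) hN)⟩
    | succ n ih =>
      obtain ⟨v, hn, hv⟩ := ih
      have := length_le_length_dekking v
      exact ⟨dekking v, by omega, abelianPowerFree_dekking hN hv⟩
  obtain ⟨v, hn, hv⟩ := exists_longer
  exact ⟨v.take n, List.length_take_of_le hn.le, hv.of_infix (List.take_prefix n v).isInfix⟩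

end Dekking

theorem ternary_avoids_abelian_4_powers_cyclically :
    ∀ n : ℕ, 0 < n → ∃ w : List (Fin 3), w.length = n ∧ AvoidsAbelianCyc 4 w := by
  intro n hn
  obtain ⟨v, hv_length, hv⟩ := exists_length_eq_and_abelianPowerFree le_rfl (n - 1)
  let f : Bool → Fin 3 := fun b => if b then 0 else 1
  have hf : Function.Injective f := by decide
  have two_notMem : 2 ∉ v.map f := by simp [f]
  refine ⟨v.map f ++ [2], ?_, (hv.map hf).avoidsAbelianCyc_concat two_notMem⟩
  rw [List.length_append, List.length_map, hv_length, List.length_singleton, Nat.sub_add_cancel hn]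
end

section
/- For every integer k ≥ 5 and every positive integer n there exists a word of length n over a k-letter alphabet that avoids abelian 2-powers cyclically. (In particular, A(k) = 2 for k ≥ 5.) -/
/-!
An infinite abelian square-free word over `ZMod 4` comes from Keränen's 85-uniform morphism, which
commutes with shifting all letters. Encode the Parikh vector of a prefix as an element of the group
ring `ℤ[ZMod 4]`: the morphism then acts as multiplication by one fixed element `P`, and three cut
points of the fixed point bound an abelian square iff their prefix vectors satisfy
`p₀ + p₂ = 2 * p₁`. Reducing this equation modulo `P` shows that all three cut points can be moved
to block boundaries; cancelling `P` gives a shorter square unless the original one lies inside the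
image of two letters, which is a finite check.

For the cyclic word of length `n`, append a fresh fifth letter `∗` to the prefix of length `n - 1`.
In its periodic repetition an abelian square of period at most `n / 2` cannot contain `∗`, so it
would be a square of the infinite word. A square of period `m` with `n / 2 < m < n` yields a square
of period `n - m`, since its two halves complete the same factor to a full period.
-/

/-- The Parikh vector of the factor `W i ⋯ W (i + m - 1)` of the infinite word `W`, encoded as the
multiset of its letters, so that abelian equivalence of factors becomes equality. -/
def parikh {α : Type*} (W : ℕ → α) (i m : ℕ) : Multiset α :=
  (Multiset.range m).map fun j => W (i + j)

/-- The factor of length `2 * m` of `W` at position `i` is an abelian square. The empty square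
`m = 0` is allowed here. -/
def IsAbelianSquareAt {α : Type*} (W : ℕ → α) (i m : ℕ) : Prop :=
  parikh W i m = parikh W (i + m) m

/-- The infinite word `W` has no nonempty abelian square as a factor. -/
def AbelianSquareFree {α : Type*} (W : ℕ → α) : Prop :=
  ∀ i m, 0 < m → ¬IsAbelianSquareAt W i m

section Parikh

variable {α β : Type*}

theorem parikh_add (W : ℕ → α) (i m m' : ℕ) :
    parikh W i (m + m') = parikh W i m + parikh W (i + m) m' := by
  simp only [parikh, Multiset.range_add, Multiset.map_add, Multiset.map_map, Function.comp_def,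
    add_assoc]

theorem parikh_congr {V W : ℕ → α} {i i' m : ℕ} (h : ∀ j < m, V (i + j) = W (i' + j)) :
    parikh V i m = parikh W i' m :=
  Multiset.map_congr rfl fun j hj => h j (Multiset.mem_range.mp hj)

theorem parikh_comp (f : α → β) (W : ℕ → α) (i m : ℕ) :
    parikh (f ∘ W) i m = (parikh W i m).map f :=
  (Multiset.map_map f _ _).symm

theorem isAbelianSquareAt_congr {V W : ℕ → α} {i i' m : ℕ}
    (h : ∀ j < m + m, V (i + j) = W (i' + j)) :
    IsAbelianSquareAt V i m ↔ IsAbelianSquareAt W i' m := by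
  have hfst : parikh V i m = parikh W i' m := parikh_congr fun j hj => h j (by omega)
  have hsnd : parikh V (i + m) m = parikh W (i' + m) m := parikh_congr fun j hj => by
    simpa only [add_assoc] using h (m + j) (by omega)
  rw [IsAbelianSquareAt, IsAbelianSquareAt, hfst, hsnd]

theorem isAbelianSquareAt_comp_iff {f : α → β} (hf : Function.Injective f) {W : ℕ → α} {i m : ℕ} :
    IsAbelianSquareAt (f ∘ W) i m ↔ IsAbelianSquareAt W i m := by
  rw [IsAbelianSquareAt, IsAbelianSquareAt, parikh_comp, parikh_comp,
    (Multiset.map_injective hf).eq_iff]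

theorem IsAbelianSquareAt.sum_range {W : ℕ → α} {i m : ℕ}
    (h : IsAbelianSquareAt W i m) (f : α → ℕ) :
    ∑ j ∈ Finset.range i, f (W j) + ∑ j ∈ Finset.range (i + m + m), f (W j) =
      2 * ∑ j ∈ Finset.range (i + m), f (W j) := by
  have hparikh (i : ℕ) : ∑ j ∈ Finset.range m, f (W (i + j)) = ((parikh W i m).map f).sum := by
    rw [parikh, Multiset.map_map]
    rfl
  rw [Finset.sum_range_add _ (i + m), Finset.sum_range_add _ i, hparikh, hparikh, h]
  ring

end Parikh

section Periodic

variable {α : Type*} {V : ℕ → α} {N : ℕ}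

theorem parikh_period (hV : Function.Periodic V N) (i : ℕ) : parikh V i N = parikh V 0 N := by
  induction i with
  | zero => rfl
  | succ i ih =>
    have hshift : parikh V (i + N) 1 = parikh V i 1 := parikh_congr fun j _ => by
      rw [add_right_comm, hV]
    have hsplit : parikh V i 1 + parikh V (i + 1) N = parikh V i N + parikh V (i + N) 1 := by
      rw [← parikh_add, ← parikh_add, add_comm]
    rw [hshift, ih, add_comm] at hsplit
    exact add_right_cancel hsplit

/-- Both halves of the long square complete the same short factor to a full period. -/
theorem IsAbelianSquareAt.complement {s c d : ℕ} (hV : Function.Periodic V (c + d + d))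
    (h : IsAbelianSquareAt V s (c + d)) : IsAbelianSquareAt V (s + c) d := by
  have hfst : parikh V s (c + d) + parikh V (s + c + d) d = parikh V 0 (c + d + d) := by
    rw [add_assoc s, ← parikh_add, parikh_period hV]
  have hsnd : parikh V (s + c) d + parikh V (s + (c + d)) (c + d) = parikh V 0 (c + d + d) := by
    rw [← add_assoc s, ← parikh_add, add_comm d, parikh_period hV]
  rw [← h, add_comm, ← hfst] at hsnd
  exact add_left_cancel hsnd

theorem flatten_replicate_map_range (hV : Function.Periodic V N) (K : ℕ) :
    (List.replicate K ((List.range N).map V)).flatten = (List.range (K * N)).map V := by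
  induction K with
  | zero => simp only [List.replicate_zero, List.flatten_nil, zero_mul, List.range_zero,
      List.map_nil]
  | succ K ih =>
    have hshift : V ∘ (K * N + ·) = V := funext fun i => by
      simpa only [Function.comp_apply, add_comm, smul_eq_mul] using hV.nsmul K i
    rw [List.replicate_succ', List.flatten_concat, ih, Nat.succ_mul, List.range_add,
      List.map_append, List.map_map, hshift]

theorem coe_eq_parikh_of_map_range_eq {M : ℕ} {p u t : List α}
    (h : (List.range M).map V = p ++ u ++ t) : (u : Multiset α) = parikh V p.length u.length := by
  have hM : M = p.length + u.length + t.length := by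
    simpa only [List.length_map, List.length_range, List.length_append] using congrArg List.length h
  rw [hM, List.range_add, List.range_add, List.map_append, List.map_append] at h
  have hp := (List.append_inj h (by simp)).1
  have hu := (List.append_inj hp (by simp)).2
  rw [List.map_map] at hu
  exact congrArg ((↑) : List α → Multiset α) hu.symm

theorem avoidsAbelianCyc_two_of_periodic (hV : Function.Periodic V N)
    (h : ∀ s m, 0 < m → m < N → ¬IsAbelianSquareAt V s m) :
    AvoidsAbelianCyc 2 ((List.range N).map V) := by
  rintro m _ ⟨hm, f, rfl, hlen, hperm⟩ ⟨K, p, t, hocc⟩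
  have hsplit : (List.range (K * N)).map V = p ++ f 0 ++ (f 1 ++ t) := by
    simp [← flatten_replicate_map_range hV, ← hocc, List.ofFn_succ]
  have h₀ : (f 0 : Multiset α) = parikh V p.length m := by
    rw [coe_eq_parikh_of_map_range_eq hsplit, hlen]
  have h₁ : (f 1 : Multiset α) = parikh V (p.length + m) m := by
    rw [← List.append_assoc] at hsplit
    rw [coe_eq_parikh_of_map_range_eq hsplit, List.length_append, hlen, hlen]
  by_contra hlt
  refine h p.length m hm (by simpa using hlt) ?_
  rw [IsAbelianSquareAt, ← h₀, ← h₁]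
  exact Multiset.coe_eq_coe.mpr (hperm 0 1)

end Periodic

/-- The periodic word `(W 0 ⋯ W (n - 1) ∗)^ω`, where the fresh letter `∗` is `none`. -/
def markedCycle {α : Type*} (W : ℕ → α) (n i : ℕ) : Option α :=
  if i % (n + 1) = n then none else some (W (i % (n + 1)))

section MarkedCycle

variable {α : Type*} {W : ℕ → α} {n : ℕ}

theorem markedCycle_eq_none_iff {i : ℕ} : markedCycle W n i = none ↔ i % (n + 1) = n := by
  unfold markedCycle
  split_ifs with h <;> simp [h]

theorem markedCycle_periodic (W : ℕ → α) (n : ℕ) : Function.Periodic (markedCycle W n) (n + 1) :=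
  fun i => by simp only [markedCycle, Nat.add_mod_right]

/-- The mark would have to occur in both halves, but its occurrences are too far apart. -/
theorem IsAbelianSquareAt.markedCycle_ne_none {s m : ℕ}
    (h : IsAbelianSquareAt (markedCycle W n) s m) (hm : m + m ≤ n + 1) {j : ℕ} (hj : j < m + m) :
    markedCycle W n (s + j) ≠ none := by
  have hnotMem : none ∉ parikh (markedCycle W n) s m := fun hmem => by
    have hmem' := hmem
    rw [h] at hmem'
    obtain ⟨j₁, hj₁, h₁⟩ := Multiset.mem_map.mp hmem
    obtain ⟨j₂, hj₂, h₂⟩ := Multiset.mem_map.mp hmem'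
    rw [Multiset.mem_range] at hj₁ hj₂
    rw [markedCycle_eq_none_iff] at h₁ h₂
    have hdvd : n + 1 ∣ s + m + j₂ - (s + j₁) :=
      (Nat.modEq_iff_dvd' (by omega)).mp (h₁.trans h₂.symm)
    have := Nat.le_of_dvd (by omega) hdvd
    omega
  intro hnone
  refine hnotMem ?_
  rcases lt_or_ge j m with hjm | hjm
  · exact Multiset.mem_map.mpr ⟨j, Multiset.mem_range.mpr hjm, hnone⟩
  · rw [h]
    refine Multiset.mem_map.mpr ⟨j - m, Multiset.mem_range.mpr (by omega), ?_⟩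
    rwa [show s + m + (j - m) = s + j by omega]

theorem AbelianSquareFree.not_isAbelianSquareAt_markedCycle_of_short (hW : AbelianSquareFree W)
    {s m : ℕ} (hm : 0 < m) (hmn : m + m ≤ n + 1) :
    ¬IsAbelianSquareAt (markedCycle W n) s m := by
  intro h
  have hlt : s % (n + 1) < n + 1 := Nat.mod_lt s n.succ_pos
  have hshift {j : ℕ} (hj : s % (n + 1) + j < n + 1) :
      (s + j) % (n + 1) = s % (n + 1) + j := by
    rw [← Nat.mod_add_mod, Nat.mod_eq_of_lt hj]
  have hfit : s % (n + 1) + (m + m) ≤ n := by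
    by_contra hwrap
    refine h.markedCycle_ne_none hmn (j := n - s % (n + 1)) (by omega) ?_
    rw [markedCycle_eq_none_iff, hshift (by omega)]
    omega
  refine hW (s % (n + 1)) m hm ((isAbelianSquareAt_comp_iff (Option.some_injective α)).mp ?_)
  refine (isAbelianSquareAt_congr fun j hj => ?_).mp h
  rw [markedCycle, hshift (by omega), if_neg (by omega), Function.comp_apply]

theorem AbelianSquareFree.not_isAbelianSquareAt_markedCycle (hW : AbelianSquareFree W)
    {s m : ℕ} (hm : 0 < m) (hmn : m < n + 1) : ¬IsAbelianSquareAt (markedCycle W n) s m := by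
  rcases le_or_gt (m + m) (n + 1) with hshort | hlong
  · exact hW.not_isAbelianSquareAt_markedCycle_of_short hm hshort
  · obtain ⟨d, hd⟩ := Nat.exists_eq_add_of_le hmn.le
    obtain ⟨c, rfl⟩ := Nat.exists_eq_add_of_le' (show d ≤ m by omega)
    exact fun h => hW.not_isAbelianSquareAt_markedCycle_of_short (by omega) (by omega)
      (h.complement (hd ▸ markedCycle_periodic W n))

theorem AbelianSquareFree.exists_avoidsAbelianCyc_two {β : Type*} (hW : AbelianSquareFree W)
    (f : Option α ↪ β) (n : ℕ) : ∃ w : List β, w.length = n + 1 ∧ AvoidsAbelianCyc 2 w := by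
  refine ⟨(List.range (n + 1)).map (f ∘ markedCycle W n), by simp, ?_⟩
  refine avoidsAbelianCyc_two_of_periodic ((markedCycle_periodic W n).comp f) fun s m hm hmn => ?_
  rw [isAbelianSquareAt_comp_iff f.injective]
  exact hW.not_isAbelianSquareAt_markedCycle hm hmn

end MarkedCycle

local notation "𝐱[" a "]" => AddMonoidAlgebra.single a (1 : ℤ)

section LetterSum

variable {α : Type*}

/-- The Parikh vector of a multiset of letters as an element of `ℤ[α]`, so that for a group `α`
shifting all letters by `b` becomes multiplication by the monomial of `b`. -/
noncomputable def letterSum (s : Multiset α) : AddMonoidAlgebra ℤ α :=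
  (s.map fun a => 𝐱[a]).sum

/-- The Parikh vector in `ℤ[α]` of the prefix of length `n` of the infinite word `W`. -/
noncomputable def prefixSum (W : ℕ → α) (n : ℕ) : AddMonoidAlgebra ℤ α :=
  letterSum (parikh W 0 n)

theorem letterSum_add (s t : Multiset α) : letterSum (s + t) = letterSum s + letterSum t := by
  rw [letterSum, Multiset.map_add, Multiset.sum_add, letterSum, letterSum]

theorem coeff_letterSum [DecidableEq α] (s : Multiset α) (a : α) :
    (letterSum s).coeff a = s.count a := by
  induction s using Multiset.induction_on with
  | empty => simp [letterSum]
  | cons b s ih =>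
    rw [← Multiset.singleton_add, letterSum_add, AddMonoidAlgebra.coeff_add, Finsupp.add_apply, ih,
      Multiset.count_add]
    simp [letterSum, Finsupp.single_apply, Multiset.count_singleton, eq_comm (a := a)]

theorem letterSum_injective : Function.Injective (letterSum (α := α)) := by
  classical
  intro s t h
  refine Multiset.ext.mpr fun a => ?_
  have hcoeff := congrArg (fun x => x.coeff a) h
  simpa only [coeff_letterSum, Nat.cast_inj] using hcoeff

theorem prefixSum_add (W : ℕ → α) (i m : ℕ) :
    prefixSum W (i + m) = prefixSum W i + letterSum (parikh W i m) := by
  rw [prefixSum, parikh_add, letterSum_add, zero_add, prefixSum]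

theorem prefixSum_zero (W : ℕ → α) : prefixSum W 0 = 0 := rfl

theorem prefixSum_succ (W : ℕ → α) (n : ℕ) :
    prefixSum W (n + 1) = prefixSum W n + 𝐱[W n] := by
  rw [prefixSum_add]
  simp [letterSum, parikh]

theorem coeff_prefixSum [DecidableEq α] (W : ℕ → α) (n : ℕ) (a : α) :
    (prefixSum W n).coeff a = Nat.count (W · = a) n := by
  induction n with
  | zero => simp [prefixSum_zero]
  | succ n ih =>
    rw [prefixSum_succ, AddMonoidAlgebra.coeff_add, Finsupp.add_apply, ih, Nat.count_succ]
    simp [Finsupp.single_apply]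

end LetterSum

section PrefixSum

variable {G : Type*} [AddCommMonoid G] {W : ℕ → G}

theorem letterSum_map_add_left (b : G) (s : Multiset G) :
    letterSum (s.map (b + ·)) = 𝐱[b] * letterSum s := by
  simp only [letterSum, Multiset.map_map, ← Multiset.sum_map_mul_left, Function.comp_def,
    AddMonoidAlgebra.single_mul_single, one_mul]

theorem isAbelianSquareAt_iff_prefixSum {i m : ℕ} :
    IsAbelianSquareAt W i m ↔
      prefixSum W i + prefixSum W (i + m + m) = 2 * prefixSum W (i + m) := by
  rw [IsAbelianSquareAt, ← letterSum_injective.eq_iff, prefixSum_add W (i + m), prefixSum_add W i]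
  constructor
  · intro h
    linear_combination -h
  · intro h
    linear_combination -h

theorem add_eq_two_mul_of_prefixSum_eq {i j k : ℕ}
    (h : prefixSum W i + prefixSum W k = 2 * prefixSum W j) : i + k = 2 * j := by
  rw [two_mul, prefixSum, prefixSum, prefixSum, ← letterSum_add, ← letterSum_add] at h
  have hcard := congrArg Multiset.card (letterSum_injective h)
  simp only [parikh, Multiset.card_add, Multiset.card_map, Multiset.card_range] at hcard
  omega

end PrefixSum

section FixedPoint

variable {G : Type*} [AddCommGroup G] {A W : ℕ → G} {L : ℕ}

/-- The infinite word `W` is fixed by the `L`-uniform morphism that sends a letter `b` to the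
word `(b + A 0) (b + A 1) ⋯ (b + A (L - 1))`. -/
def IsMorphismFixedPoint (A : ℕ → G) (L : ℕ) (W : ℕ → G) : Prop :=
  ∀ q, ∀ r < L, W (L * q + r) = W q + A r

/-- Solutions of the square equation modulo the image `prefixSum A L` of the letter `0` come only
from cut points on block boundaries: each of the three cut points of an abelian square, lying
at offsets `r₀`, `r₁`, `r₂` inside images of the letters `a₀`, `0`, `a₂`, can be moved to the start
(`e = 0`) or to the end (`e = 1`) of its block. -/
def Desubstitutes (A : ℕ → G) (L : ℕ) : Prop :=
  ∀ a₀ a₂ : G, ∀ r₀ < L, ∀ r₁ < L, ∀ r₂ < L, r₀ + r₂ ≡ 2 * r₁ [MOD L] →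
    prefixSum A L ∣ 𝐱[a₀] * prefixSum A r₀ + 𝐱[a₂] * prefixSum A r₂ - 2 * prefixSum A r₁ →
    ∃ e₀ ≤ (1 : ℕ), ∃ e₁ ≤ (1 : ℕ), ∃ e₂ ≤ (1 : ℕ),
      𝐱[a₀] * prefixSum A r₀ + 𝐱[a₂] * prefixSum A r₂ - 2 * prefixSum A r₁ =
        prefixSum A L * (e₀ * 𝐱[a₀] + e₂ * 𝐱[a₂] - 2 * e₁)

/-- The image of the two-letter word `0 b` under the morphism of `IsMorphismFixedPoint`, of length
`2 * L`. -/
def pairWord (A : ℕ → G) (L : ℕ) (b : G) (i : ℕ) : G :=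
  if i < L then A i else b + A (i - L)

/-- The morphism of `IsMorphismFixedPoint` maps each two-letter word with distinct letters to an
abelian square-free word. By shifting, it suffices that the first letter is `0`. -/
def PairImagesSquareFree (A : ℕ → G) (L : ℕ) : Prop :=
  ∀ b ≠ 0, ∀ i m, 0 < m → i + m + m ≤ 2 * L → ¬IsAbelianSquareAt (pairWord A L b) i m

theorem prefixSum_add_of_le_one (W : ℕ → G) (q : ℕ) {e : ℕ} (he : e ≤ 1) :
    prefixSum W (q + e) = prefixSum W q + e * 𝐱[W q] := by
  obtain rfl | rfl := Nat.le_one_iff_eq_zero_or_eq_one.mp he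
  · simp
  · rw [prefixSum_succ, Nat.cast_one, one_mul]

theorem Desubstitutes.exists_of_dvd (hA : Desubstitutes A L) {a₀ a₁ a₂ : G} {r₀ r₁ r₂ : ℕ}
    (hr₀ : r₀ < L) (hr₁ : r₁ < L) (hr₂ : r₂ < L) (hr : r₀ + r₂ ≡ 2 * r₁ [MOD L])
    (hdvd : prefixSum A L ∣ 𝐱[a₀] * prefixSum A r₀ + 𝐱[a₂] * prefixSum A r₂ -
      2 * (𝐱[a₁] * prefixSum A r₁)) :
    ∃ e₀ ≤ (1 : ℕ), ∃ e₁ ≤ (1 : ℕ), ∃ e₂ ≤ (1 : ℕ),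
      𝐱[a₀] * prefixSum A r₀ + 𝐱[a₂] * prefixSum A r₂ -
        2 * (𝐱[a₁] * prefixSum A r₁) =
      prefixSum A L * (e₀ * 𝐱[a₀] + e₂ * 𝐱[a₂] - 2 * (e₁ * 𝐱[a₁])) := by
  have hfactor (b : G) : 𝐱[b] = 𝐱[a₁] * 𝐱[b - a₁] := by
    rw [AddMonoidAlgebra.single_mul_single, add_sub_cancel, one_mul]
  have hunit : IsUnit (𝐱[a₁]) :=
    IsUnit.of_mul_eq_one (𝐱[-a₁]) <| by
      rw [← zero_sub, ← hfactor, AddMonoidAlgebra.one_def]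
  have hnormal : 𝐱[a₀] * prefixSum A r₀ + 𝐱[a₂] * prefixSum A r₂ -
      2 * (𝐱[a₁] * prefixSum A r₁) = 𝐱[a₁] * (𝐱[a₀ - a₁] * prefixSum A r₀ +
        𝐱[a₂ - a₁] * prefixSum A r₂ - 2 * prefixSum A r₁) := by
    rw [hfactor a₀, hfactor a₂]
    ring
  rw [hnormal] at hdvd ⊢
  obtain ⟨e₀, he₀, e₁, he₁, e₂, he₂, he⟩ :=
    hA (a₀ - a₁) (a₂ - a₁) r₀ hr₀ r₁ hr₁ r₂ hr₂ hr (hunit.dvd_mul_left.mp hdvd)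
  refine ⟨e₀, he₀, e₁, he₁, e₂, he₂, ?_⟩
  rw [he, hfactor a₀, hfactor a₂]
  ring

namespace IsMorphismFixedPoint

theorem letterSum_parikh_block (hW : IsMorphismFixedPoint A L W) (q : ℕ) {r : ℕ} (hr : r ≤ L) :
    letterSum (parikh W (L * q) r) = 𝐱[W q] * prefixSum A r := by
  have hblock : parikh W (L * q) r = (parikh A 0 r).map (W q + ·) := by
    rw [← parikh_comp]
    exact parikh_congr fun j hj => by rw [hW q j (by omega), zero_add, Function.comp_apply]
  rw [hblock, letterSum_map_add_left, prefixSum]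

theorem prefixSum_mul (hW : IsMorphismFixedPoint A L W) (q : ℕ) :
    prefixSum W (L * q) = prefixSum A L * prefixSum W q := by
  induction q with
  | zero => rw [mul_zero, prefixSum_zero, mul_zero]
  | succ q ih =>
    rw [Nat.mul_succ, prefixSum_add, ih, hW.letterSum_parikh_block q le_rfl, prefixSum_succ]
    ring

theorem prefixSum_mul_add (hW : IsMorphismFixedPoint A L W) (q : ℕ) {r : ℕ} (hr : r ≤ L) :
    prefixSum W (L * q + r) = prefixSum A L * prefixSum W q + 𝐱[W q] * prefixSum A r := by
  rw [prefixSum_add, hW.prefixSum_mul, hW.letterSum_parikh_block q hr]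

theorem prefixSum_eq (hW : IsMorphismFixedPoint A L W) (hL : 0 < L) (i : ℕ) :
    prefixSum W i = prefixSum A L * prefixSum W (i / L) + 𝐱[W (i / L)] * prefixSum A (i % L) := by
  rw [← hW.prefixSum_mul_add (i / L) (Nat.mod_lt i hL).le, Nat.div_add_mod]

/-- A square of the fixed point comes from a possibly empty square of its preimage; regularity of
`prefixSum A L` plays the role of invertibility of the Parikh matrix of the morphism. -/
theorem exists_desubstituted (hW : IsMorphismFixedPoint A L W) (hL : 0 < L)
    (hreg : IsLeftRegular (prefixSum A L)) (hA : Desubstitutes A L) {i m : ℕ}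
    (h : IsAbelianSquareAt W i m) :
    ∃ e₀ ≤ (1 : ℕ), ∃ e₁ ≤ (1 : ℕ), ∃ e₂ ≤ (1 : ℕ),
      prefixSum W (i / L + e₀) + prefixSum W ((i + m + m) / L + e₂) =
        2 * prefixSum W ((i + m) / L + e₁) := by
  rw [isAbelianSquareAt_iff_prefixSum, hW.prefixSum_eq hL i, hW.prefixSum_eq hL (i + m),
    hW.prefixSum_eq hL (i + m + m)] at h
  have hmod : i % L + (i + m + m) % L ≡ 2 * ((i + m) % L) [MOD L] :=
    (((Nat.mod_modEq i L).add (Nat.mod_modEq (i + m + m) L)).trans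
      (congrArg (· % L) (by ring))).trans ((Nat.mod_modEq (i + m) L).mul_left 2).symm
  obtain ⟨e₀, he₀, e₁, he₁, e₂, he₂, he⟩ := hA.exists_of_dvd
    (a₀ := W (i / L)) (a₁ := W ((i + m) / L)) (a₂ := W ((i + m + m) / L))
    (Nat.mod_lt i hL) (Nat.mod_lt (i + m) hL) (Nat.mod_lt (i + m + m) hL) hmod
    ⟨2 * prefixSum W ((i + m) / L) - prefixSum W (i / L) - prefixSum W ((i + m + m) / L), by
      linear_combination h⟩
  refine ⟨e₀, he₀, e₁, he₁, e₂, he₂, hreg ?_⟩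
  simp only [prefixSum_add_of_le_one W _ he₀, prefixSum_add_of_le_one W _ he₁,
    prefixSum_add_of_le_one W _ he₂]
  linear_combination h - he

theorem isAbelianSquareAt_pairWord (hW : IsMorphismFixedPoint A L W) {q r m : ℕ} {b : G}
    (hb : r + m + m ≤ L ∨ W (q + 1) = W q + b) (hm : r + m + m ≤ 2 * L) :
    IsAbelianSquareAt W (L * q + r) m ↔ IsAbelianSquareAt (pairWord A L b) r m := by
  rw [← isAbelianSquareAt_comp_iff (add_right_injective (W q)) (W := pairWord A L b)]
  refine isAbelianSquareAt_congr fun j hj => ?_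
  rw [Function.comp_apply, pairWord, add_assoc]
  split_ifs with hlt
  · exact hW q _ hlt
  · have hq : W (q + 1) = W q + b := hb.resolve_left (by omega)
    rw [← add_assoc (W q), ← hq, ← hW (q + 1) _ (by omega)]
    congr 1
    rw [Nat.mul_succ]
    omega

/-- If the window crosses a block boundary between equal letters `W q`, `W (q + 1)`, those two
letters are themselves a square ending earlier. -/
theorem not_isAbelianSquareAt_of_two_blocks [Nontrivial G] (hW : IsMorphismFixedPoint A L W)
    (hL : 2 < L) (hpair : PairImagesSquareFree A L) {q r m : ℕ} (hm : 0 < m)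
    (hlen : r + m + m ≤ 2 * L)
    (ih : ∀ i' m', i' + m' + m' < L * q + r + m + m → 0 < m' → ¬IsAbelianSquareAt W i' m') :
    ¬IsAbelianSquareAt W (L * q + r) m := by
  by_cases hone : r + m + m ≤ L
  · obtain ⟨b, hb⟩ := exists_ne (0 : G)
    rw [hW.isAbelianSquareAt_pairWord (b := b) (.inl hone) hlen]
    exact hpair b hb r m hm hlen
  · rw [hW.isAbelianSquareAt_pairWord (.inr (add_sub_cancel (W q) (W (q + 1))).symm) hlen]
    refine hpair _ (sub_ne_zero.mpr fun heq => ?_) r m hm hlen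
    have hq : 1 * q ≤ L * q := Nat.mul_le_mul_right q (by omega)
    refine ih q 1 (by omega) one_pos (parikh_congr fun j hj => ?_)
    rw [Nat.lt_one_iff.mp hj]
    exact heq.symm

theorem abelianSquareFree [Nontrivial G] (hW : IsMorphismFixedPoint A L W) (hL : 2 < L)
    (hreg : IsLeftRegular (prefixSum A L)) (hA : Desubstitutes A L)
    (hpair : PairImagesSquareFree A L) : AbelianSquareFree W := by
  suffices h : ∀ k i m, i + m + m = k → 0 < m → ¬IsAbelianSquareAt W i m from
    fun i m => h _ i m rfl
  intro k
  induction k using Nat.strong_induction_on with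
  | _ k ih =>
  rintro i m rfl hm hsq
  obtain ⟨e₀, he₀, e₁, he₁, e₂, he₂, heq⟩ := hW.exists_desubstituted (by omega) hreg hA hsq
  have hi : L * (i / L) + i % L = i := Nat.div_add_mod i L
  have hlast : (i + m + m) / L ≤ i / L + 1 ∨ i / L + e₀ < (i + m) / L + e₁ := by
    have := add_eq_two_mul_of_prefixSum_eq heq
    omega
  rcases hlast with htwo | hlt
  · have hlen : i + m + m < L * (i / L + 2) := by
      rw [mul_comm]
      exact (Nat.div_lt_iff_lt_mul (by omega)).mp (by omega)
    rw [← hi] at hsq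
    refine hW.not_isAbelianSquareAt_of_two_blocks hL hpair hm (by linarith) ?_ hsq
    rw [hi]
    exact fun i' m' hlt => ih _ hlt i' m' rfl
  · obtain ⟨m', hm'⟩ := Nat.exists_eq_add_of_lt hlt
    have hk := add_eq_two_mul_of_prefixSum_eq heq
    have hdesc : IsAbelianSquareAt W (i / L + e₀) (m' + 1) := by
      rw [isAbelianSquareAt_iff_prefixSum]
      convert heq using 3 <;> omega
    have hdiv : (i + m + m) / L ≤ (i + m + m) / 3 := Nat.div_le_div_left hL three_pos
    exact ih _ (by omega) _ _ rfl m'.succ_pos hdesc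

end IsMorphismFixedPoint

/-- The letter at position `n` is the sum of the values of `A` at the base-`L` digits of `n`: the
infinite word obtained by iterating the morphism of `IsMorphismFixedPoint` on the letter `0`. -/
def digitSumWord (A : ℕ → G) (L n : ℕ) : G :=
  ((Nat.digits L n).map A).sum

theorem digitSumWord_isMorphismFixedPoint (hL : 1 < L) (hA : A 0 = 0) :
    IsMorphismFixedPoint A L (digitSumWord A L) := by
  intro q r hr
  by_cases hpos : r ≠ 0 ∨ q ≠ 0
  · rw [digitSumWord, add_comm, Nat.digits_add L hL r q hr hpos, List.map_cons, List.sum_cons,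
      add_comm, digitSumWord]
  · obtain ⟨rfl, rfl⟩ : r = 0 ∧ q = 0 := by omega
    rw [hA, mul_zero, add_zero, add_zero]

end FixedPoint

section RootEval

variable {n : ℕ} [NeZero n] {R : Type*} [CommRing R]

/-- The evaluation of `ℤ[ZMod n] = ℤ[x] / (x ^ n - 1)` at an `n`-th root of unity `t`. -/
noncomputable def rootEval (t : R) (ht : t ^ n = 1) : AddMonoidAlgebra ℤ (ZMod n) →ₐ[ℤ] R :=
  AddMonoidAlgebra.lift ℤ R (ZMod n)
    { toFun a := t ^ a.toAdd.val
      map_one' := by rw [toAdd_one, ZMod.val_zero, pow_zero]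
      map_mul' a b := by rw [toAdd_mul, ZMod.val_add, ← pow_eq_pow_mod _ ht, pow_add] }

theorem rootEval_single (t : R) (ht : t ^ n = 1) (a : ZMod n) :
    rootEval t ht 𝐱[a] = t ^ a.val := by
  rw [rootEval, AddMonoidAlgebra.lift_single, one_smul]
  rfl

theorem rootEval_prefixSum (t : R) (ht : t ^ n = 1) (W : ℕ → ZMod n) (r : ℕ) :
    rootEval t ht (prefixSum W r) = ∑ j ∈ Finset.range r, t ^ (W j).val := by
  induction r with
  | zero => rw [prefixSum_zero, map_zero, Finset.sum_range_zero]
  | succ r ih => rw [prefixSum_succ, map_add, ih, rootEval_single, Finset.sum_range_succ]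

end RootEval

/-- Keränen's word: the image of the letter `0` under his 85-uniform abelian square-free morphism
on four letters. -/
def keranenWord : List (ZMod 4) :=
  [ 0, 1, 2, 0, 2, 3, 2, 1, 2, 3, 2, 0, 3, 2, 3, 1, 3,
    0, 1, 0, 2, 0, 1, 0, 3, 1, 0, 1, 2, 1, 3, 1, 2, 1,
    0, 2, 1, 2, 3, 2, 0, 2, 1, 0, 1, 3, 0, 1, 0, 2, 0,
    3, 2, 1, 2, 3, 2, 0, 2, 3, 1, 2, 1, 0, 2, 1, 2, 3,
    2, 0, 2, 3, 2, 1, 3, 2, 3, 0, 3, 1, 3, 2, 1, 2, 0 ]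

/-- Keränen's word as a function of the position; it is only used at positions below 85. -/
def keranenLetter (i : ℕ) : ZMod 4 := keranenWord.getD i 0

/-- The value of `prefixSum keranenLetter r` at `30176`. Since `30176 ^ 4 ≡ 1` and
`prefixSum keranenLetter 85` vanishes at `30176` modulo `43435`, this turns divisibility by
`prefixSum keranenLetter 85` into a congruence modulo `43435`. -/
def keranenResidue (r : ℕ) : ℕ := ∑ j ∈ Finset.range r, 30176 ^ (keranenLetter j).val

theorem prefixSum_keranenLetter : prefixSum keranenLetter 85 =
    .single 0 19 + .single 1 21 + .single 2 27 + .single 3 18 := by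
  ext c
  rw [coeff_prefixSum]
  simp only [AddMonoidAlgebra.coeff_add, Finsupp.add_apply, AddMonoidAlgebra.coeff_single,
    Finsupp.single_apply]
  revert c
  decide +kernel

theorem isLeftRegular_prefixSum_keranenLetter : IsLeftRegular (prefixSum keranenLetter 85) := by
  rw [isLeftRegular_iff_right_eq_zero_of_mul]
  intro x hx
  have hcoeff (c : ZMod 4) : 19 * x.coeff c + 21 * x.coeff (c - 1) + 27 * x.coeff (c - 2) +
      18 * x.coeff (c - 3) = 0 := by
    have := congrArg (fun y => y.coeff c) hx
    simpa only [prefixSum_keranenLetter, add_mul, AddMonoidAlgebra.coeff_add, Finsupp.add_apply,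
      AddMonoidAlgebra.coeff_single_mul_apply, neg_add_eq_sub, sub_zero,
      AddMonoidAlgebra.coeff_zero, Finsupp.zero_apply] using this
  have h₀ : 19 * x.coeff 0 + 21 * x.coeff 3 + 27 * x.coeff 2 + 18 * x.coeff 1 = 0 := hcoeff 0
  have h₁ : 19 * x.coeff 1 + 21 * x.coeff 0 + 27 * x.coeff 3 + 18 * x.coeff 2 = 0 := hcoeff 1
  have h₂ : 19 * x.coeff 2 + 21 * x.coeff 1 + 27 * x.coeff 0 + 18 * x.coeff 3 = 0 := hcoeff 2
  have h₃ : 19 * x.coeff 3 + 21 * x.coeff 2 + 27 * x.coeff 1 + 18 * x.coeff 0 = 0 := hcoeff 3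
  have hzero : x.coeff 0 = 0 ∧ x.coeff 1 = 0 ∧ x.coeff 2 = 0 ∧ x.coeff 3 = 0 := by omega
  ext c
  fin_cases c
  exacts [hzero.1, hzero.2.1, hzero.2.2.1, hzero.2.2.2]

theorem keranenResidue_modEq_of_dvd {a₀ a₂ : ZMod 4} {r₀ r₁ r₂ : ℕ}
    (h : prefixSum keranenLetter 85 ∣ 𝐱[a₀] * prefixSum keranenLetter r₀ +
      𝐱[a₂] * prefixSum keranenLetter r₂ - 2 * prefixSum keranenLetter r₁) :
    30176 ^ a₀.val * keranenResidue r₀ + 30176 ^ a₂.val * keranenResidue r₂ ≡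
      2 * keranenResidue r₁ [MOD 43435] := by
  have ht : (30176 : ZMod 43435) ^ 4 = 1 := by decide +kernel
  have heval (r : ℕ) : rootEval (30176 : ZMod 43435) ht (prefixSum keranenLetter r) =
      keranenResidue r := by
    rw [rootEval_prefixSum, keranenResidue]
    push_cast
    rfl
  have hzero : (keranenResidue 85 : ZMod 43435) = 0 := by
    rw [ZMod.natCast_eq_zero_iff]
    decide +kernel
  have hdvd := map_dvd (rootEval (30176 : ZMod 43435) ht) h
  simp only [map_sub, map_add, map_mul, map_ofNat, rootEval_single, heval, hzero, zero_dvd_iff,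
    sub_eq_zero] at hdvd
  rw [← ZMod.natCast_eq_natCast_iff]
  exact_mod_cast hdvd

/-- The coefficients of `Desubstitutes`, with all terms moved so that no subtraction occurs; the
offset `(2 * r₁ + 85 - r₀) % 85` is the only `r₂ < 85` with `r₀ + r₂ ≡ 2 * r₁` modulo `85`. -/
theorem exists_count_keranenLetter_eq : ∀ a₀ a₂ : ZMod 4, ∀ r₁ < 85, ∀ r₀ < 85,
    30176 ^ a₀.val * keranenResidue r₀ +
        30176 ^ a₂.val * keranenResidue ((2 * r₁ + 85 - r₀) % 85) ≡
      2 * keranenResidue r₁ [MOD 43435] →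
    ∃ e₀ ≤ 1, ∃ e₁ ≤ 1, ∃ e₂ ≤ 1, ∀ c : ZMod 4,
      Nat.count (keranenLetter · = c - a₀) r₀ +
          Nat.count (keranenLetter · = c - a₂) ((2 * r₁ + 85 - r₀) % 85) +
          2 * (e₁ * Nat.count (keranenLetter · = c) 85) =
        2 * Nat.count (keranenLetter · = c) r₁ +
          e₀ * Nat.count (keranenLetter · = c - a₀) 85 +
          e₂ * Nat.count (keranenLetter · = c - a₂) 85 := by
  decide +kernel

theorem desubstitutes_keranenLetter : Desubstitutes keranenLetter 85 := by
  intro a₀ a₂ r₀ hr₀ r₁ hr₁ r₂ hr₂ hr hdvd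
  obtain rfl : r₂ = (2 * r₁ + 85 - r₀) % 85 := by
    rw [Nat.ModEq] at hr
    omega
  obtain ⟨e₀, he₀, e₁, he₁, e₂, he₂, he⟩ := exists_count_keranenLetter_eq a₀ a₂ r₁ hr₁ r₀ hr₀
    (keranenResidue_modEq_of_dvd hdvd)
  refine ⟨e₀, he₀, e₁, he₁, e₂, he₂, ?_⟩
  suffices h : 𝐱[a₀] * prefixSum keranenLetter r₀ +
      𝐱[a₂] * prefixSum keranenLetter ((2 * r₁ + 85 - r₀) % 85) +
      2 • e₁ • prefixSum keranenLetter 85 =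
    2 • prefixSum keranenLetter r₁ + e₀ • (𝐱[a₀] * prefixSum keranenLetter 85) +
      e₂ • (𝐱[a₂] * prefixSum keranenLetter 85) by
    simp only [nsmul_eq_mul, Nat.cast_ofNat] at h
    linear_combination h
  ext c
  simp only [AddMonoidAlgebra.coeff_add, AddMonoidAlgebra.coeff_smul, Finsupp.add_apply,
    Finsupp.smul_apply, AddMonoidAlgebra.coeff_single_mul_apply, neg_add_eq_sub, one_mul,
    coeff_prefixSum]
  simp only [nsmul_eq_mul]
  exact_mod_cast he c

/-- The weights `1000 ^ c.val` separate the Parikh vectors of words of length at most `170`. -/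
theorem sum_pairWord_keranenLetter_ne : ∀ b : ZMod 4, b ≠ 0 → ∀ i < 170, ∀ m < (170 - i) / 2,
    ∑ j ∈ Finset.range i, 1000 ^ (pairWord keranenLetter 85 b j).val +
        ∑ j ∈ Finset.range (i + (m + 1) + (m + 1)), 1000 ^ (pairWord keranenLetter 85 b j).val ≠
      2 * ∑ j ∈ Finset.range (i + (m + 1)), 1000 ^ (pairWord keranenLetter 85 b j).val := by
  decide +kernel

theorem pairImagesSquareFree_keranenLetter : PairImagesSquareFree keranenLetter 85 := by
  intro b hb i m hm hlen h
  obtain ⟨m, rfl⟩ := Nat.exists_eq_add_of_lt hm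
  rw [zero_add] at h hlen
  exact sum_pairWord_keranenLetter_ne b hb i (by omega) m (by omega)
    (h.sum_range fun c => 1000 ^ c.val)

theorem abelianSquareFree_digitSumWord_keranenLetter :
    AbelianSquareFree (digitSumWord keranenLetter 85) :=
  have : Fact (1 < 4) := ⟨by norm_num⟩
  (digitSumWord_isMorphismFixedPoint (by norm_num) rfl).abelianSquareFree (by norm_num)
    isLeftRegular_prefixSum_keranenLetter desubstitutes_keranenLetter
    pairImagesSquareFree_keranenLetter

theorem five_letters_avoid_abelian_squares_cyclically :
    ∀ k : ℕ, 5 ≤ k → ∀ n : ℕ, 0 < n →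
      ∃ w : List (Fin k), w.length = n ∧ AvoidsAbelianCyc 2 w := by
  intro k hk n hn
  obtain ⟨n, rfl⟩ := Nat.exists_eq_succ_of_ne_zero hn.ne'
  have hcard : Fintype.card (Option (ZMod 4)) ≤ Fintype.card (Fin k) := by
    rwa [Fintype.card_option, ZMod.card, Fintype.card_fin]
  obtain ⟨f⟩ := Function.Embedding.nonempty_of_card_le hcard
  exact abelianSquareFree_digitSumWord_keranenLetter.exists_avoidsAbelianCyc_two f n
end
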